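/- arXiv:0906.3284 — 3 statements merged into one kernel-verified Lean document; each statement's English description precedes it below -/
import Mathlib

section
/- For rule 218 with central cell 0, there is a one-round protocol of cost 2⌈log₂ n⌉ + 1: with the quantities α(x), l(x) and a(x) = f^{α}(x'·0·0^{α}) defined from Alice's input x, if x, x̃ ∈ {0,1}^n satisfy α(x) = α(x̃), l(x) = l(x̃) and a(x) = a(x̃), then f^n(x·0·y) = f^n(x̃·0·y) for all y ∈ {0,1}^n. Consequently, the matrix (x,y) ↦ f^n(x·0·y) has at most 2(n+1)² distinct rows. -/
/-! Rule 218 sends `(a, b, c)` to `a ⊕ c`, except that `111 ↦ 1`; on additive configurations it is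
therefore linear, since `111` never shows up there.

Write `c` for a bi-infinite configuration and look at the cell `i` after `n` steps. Let `r ≤ n` be the
largest radius for which `c` is additive on `[i - r, i + r]`. The value is then (`main_rule`)

* the linear one, `Lⁿ c i`, when `r = n`;
* `Lʳ c i`, frozen from time `r` on, when `r < n` and neither `[i - r - 1, i + r]` nor
  `[i - r, i + r + 1]` is additive;
* `1` when `r < n` and exactly one of these two intervals is additive.

This is proved by induction on `n`, from the values of the cells `i - 1`, `i`, `i + 1` at time `n`. The
key point (`left_one`) is that if additivity breaks on the left at radius `r`, the left neighbour has
value `1`.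

For the configuration `x·0·y`, additivity of `[-s, t]` depends on `x` only through `α(x)` and `l(x)`
(`additive_transfer`), so `r` and the relevant case do too. The linear value splits as a contribution
of `x` plus one of `y`. When it matters, either `r = α(x)` and the first contribution is `a(x)`, or
additivity breaks at `x_{r+1}` because of a `1` of `y`; then `l(x) = r + 1` and the contribution is `0`.
The bound on the number of rows counts the triples `(α, l, a)`. -/

/-- The local rule of elementary cellular automaton 218. -/
def rule218 : Bool → Bool → Bool → Bool
  | true,  true,  true  => true
  | true,  true,  false => true
  | true,  false, true  => false
  | true,  false, false => true
  | false, true,  true  => true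
  | false, true,  false => false
  | false, false, true  => true
  | false, false, false => false

/-- One synchronous step of rule 218 on a finite word (sliding window of width 3). -/
def step218 : List Bool → List Bool
  | a :: b :: c :: l => rule218 a b c :: step218 (b :: c :: l)
  | _ => []

/-- The `n`-th iterated local rule of rule 218. -/
def iter218 (n : ℕ) (z : List Bool) : Bool := (step218^[n] z).headD false

/-- A word in `{0,1}*` is additive if its 1s are isolated and every two consecutive
1s are separated by an odd number of 0s; equivalently, any two 1s with only 0s in
between are at even distance. -/
def IsAdditive (w : List Bool) : Prop :=
  ∀ i j, i < j → j < w.length → w.getD i false = true → w.getD j false = true →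
    (∀ t, i < t → t < j → w.getD t false = false) → (j - i) % 2 = 0

/-- Alice's input is the word `X = x_n … x_1` (read left to right, `x_1` adjacent to
the central cell).  `alpha218 X` is the maximum index `i` such that `x_i … x_1 0`
is additive. -/
noncomputable def alpha218 (X : List Bool) : ℕ :=
  sSup {i | i ≤ X.length ∧ IsAdditive (X.drop (X.length - i) ++ [false])}

/-- `ell218 X` is the minimum index `i` with `x_i = 1`, and `0` if there is none. -/
noncomputable def ell218 (X : List Bool) : ℕ :=
  sInf {i | 1 ≤ i ∧ i ≤ X.length ∧ X.getD (X.length - i) false = true}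

/-- `aVal218 X = f^α(x'·0·0^α)` where `α = alpha218 X` and `x' = x_α … x_1`. -/
noncomputable def aVal218 (X : List Bool) : Bool :=
  iter218 (alpha218 X)
    (X.drop (X.length - alpha218 X) ++ [false] ++ List.replicate (alpha218 X) false)

namespace Rule218

/-! ### Bi-infinite configurations -/

/-- The global map of rule 218 on bi-infinite configurations. -/
def G (c : ℤ → Bool) : ℤ → Bool := fun i => rule218 (c (i - 1)) (c i) (c (i + 1))

/-- The linear global map (rule 90), which agrees with `G` away from the pattern `111`. -/
def L (c : ℤ → Bool) : ℤ → Bool := fun i => xor (c (i - 1)) (c (i + 1))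

/-- Additivity of `c` on the interval `[a, b]`: all pairs of 1s, not only consecutive ones, are at
even distance. -/
def Add (c : ℤ → Bool) (a b : ℤ) : Prop :=
  ∀ i j, a ≤ i → i < j → j ≤ b → c i = true → c j = true → (j - i) % 2 = 0

lemma G_succ (n : ℕ) (c : ℤ → Bool) (i : ℤ) :
    G^[n + 1] c i = rule218 (G^[n] c (i - 1)) (G^[n] c i) (G^[n] c (i + 1)) := by
  rw [Function.iterate_succ_apply']; rfl

lemma L_succ (n : ℕ) (c : ℤ → Bool) (i : ℤ) :
    L^[n + 1] c i = xor (L^[n] c (i - 1)) (L^[n] c (i + 1)) := by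
  rw [Function.iterate_succ_apply']; rfl

lemma Add.mono {c : ℤ → Bool} {a b a' b' : ℤ} (h : Add c a b) (ha : a ≤ a') (hb : b' ≤ b) :
    Add c a' b' :=
  fun i j h1 h2 h3 => h i j (by omega) h2 (by omega)

lemma Add.congr_mod {c : ℤ → Bool} {a b i j : ℤ} (h : Add c a b) (hi : a ≤ i) (hi' : i ≤ b)
    (hj : a ≤ j) (hj' : j ≤ b) (ci : c i = true) (cj : c j = true) : (j - i) % 2 = 0 := by
  rcases lt_trichotomy i j with h1 | h1 | h1
  · exact h i j hi h1 hj' ci cj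
  · subst h1; simp
  · have := h j i hj h1 hi' cj ci
    omega

/-- If extending an additive interval by one cell on the left destroys additivity, the new cell is a
1 at odd distance from some 1 of the interval. -/
lemma not_add_left {c : ℤ → Bool} {a b : ℤ} (h : Add c a b) (h' : ¬ Add c (a - 1) b) :
    c (a - 1) = true ∧ ∃ j, a ≤ j ∧ j ≤ b ∧ c j = true ∧ (j - a) % 2 = 0 := by
  unfold Add at h'
  push Not at h'
  obtain ⟨i, j, h1, h2, h3, ci, cj, h4⟩ := h'
  by_cases hi : a ≤ i
  · exact absurd (h i j hi h2 h3 ci cj) h4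
  · have : i = a - 1 := by omega
    subst this
    exact ⟨ci, j, by omega, h3, cj, by omega⟩

/-- The linear map propagates 1s along one parity class of the light cone. -/
lemma L_parity (c : ℤ → Bool) (n : ℕ) : ∀ i, L^[n] c i = true →
    ∃ k, i - n ≤ k ∧ k ≤ i + n ∧ c k = true ∧ (k - i - n) % 2 = 0 := by
  induction n with
  | zero => intro i h; exact ⟨i, by simp, by simp, h, by simp⟩
  | succ n ih =>
    intro i h
    rw [L_succ] at h
    have : L^[n] c (i - 1) = true ∨ L^[n] c (i + 1) = true := by
      revert h; cases L^[n] c (i - 1) <;> cases L^[n] c (i + 1) <;> simp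
    rcases this with h | h
    · obtain ⟨k, h1, h2, h3, h4⟩ := ih _ h
      exact ⟨k, by push_cast; omega, by push_cast; omega, h3, by push_cast; omega⟩
    · obtain ⟨k, h1, h2, h3, h4⟩ := ih _ h
      exact ⟨k, by push_cast; omega, by push_cast; omega, h3, by push_cast; omega⟩

lemma L_zero (c : ℤ → Bool) (n : ℕ) (i : ℤ) (h : ∀ k, i - n ≤ k → k ≤ i + n → c k = false) :
    L^[n] c i = false := by
  by_contra hc
  obtain ⟨k, h1, h2, h3, -⟩ := L_parity c n i (by simpa using hc)
  simp [h k h1 h2] at h3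

/-- A single 1 at the left end of the light cone. -/
lemma L_left (c : ℤ → Bool) (n : ℕ) : ∀ i, c (i - n) = true →
    (∀ k, i - n < k → k ≤ i + n → c k = false) → L^[n] c i = true := by
  induction n with
  | zero => intro i h _; simpa using h
  | succ n ih =>
    intro i h h0
    rw [L_succ, ih (i - 1), L_zero c n (i + 1)]
    · rfl
    · intro k h1 h2; exact h0 k (by push_cast; omega) (by push_cast; omega)
    · rw [← h]; congr 1; push_cast; ring
    · intro k h1 h2; exact h0 k (by push_cast; omega) (by push_cast; omega)

lemma L_xor (c d e : ℤ → Bool) (h : ∀ k, e k = xor (c k) (d k)) (n : ℕ) :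
    ∀ i, L^[n] e i = xor (L^[n] c i) (L^[n] d i) := by
  induction n with
  | zero => exact h
  | succ n ih =>
    intro i
    simp only [L_succ, ih]
    cases L^[n] c (i - 1) <;> cases L^[n] c (i + 1) <;> cases L^[n] d (i - 1) <;>
      cases L^[n] d (i + 1) <;> rfl

lemma rule218_comm (a b c : Bool) : rule218 a b c = rule218 c b a := by
  cases a <;> cases b <;> cases c <;> rfl

lemma G_mirror (c : ℤ → Bool) (n : ℕ) : ∀ i, G^[n] (fun k => c (-k)) i = G^[n] c (-i) := by
  induction n with
  | zero => intro i; rfl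
  | succ n ih =>
    intro i
    rw [G_succ, G_succ, ih, ih, ih, rule218_comm]
    ring_nf

lemma L_mirror (c : ℤ → Bool) (n : ℕ) : ∀ i, L^[n] (fun k => c (-k)) i = L^[n] c (-i) := by
  induction n with
  | zero => intro i; rfl
  | succ n ih =>
    intro i
    rw [L_succ, L_succ, ih, ih, Bool.xor_comm]
    ring_nf

lemma add_mirror (c : ℤ → Bool) (a b : ℤ) : Add (fun k => c (-k)) a b ↔ Add c (-b) (-a) := by
  constructor
  · intro h i j h1 h2 h3 ci cj
    have := h (-j) (-i) (by omega) (by omega) (by omega) (by simpa using cj) (by simpa using ci)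
    omega
  · intro h i j h1 h2 h3 ci cj
    have := h (-j) (-i) (by omega) (by omega) (by omega) cj ci
    omega

/-! ### The value of a cell after `n` steps -/

/-- The description of the values after `n` steps in terms of the largest centred additive
interval, for all configurations and cells. The last case is the mirror image of the third. -/
structure Desc (n : ℕ) : Prop where
  lin : ∀ c i, Add c (i - n) (i + n) → G^[n] c i = L^[n] c i
  both : ∀ c i (r : ℕ), r < n → Add c (i - r) (i + r) → ¬ Add c (i - r - 1) (i + r) →
    ¬ Add c (i - r) (i + r + 1) → G^[n] c i = L^[r] c i
  left : ∀ c i (r : ℕ), r < n → ¬ Add c (i - r - 1) (i + r) → Add c (i - r) (i + r + 1) →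
    G^[n] c i = true
  right : ∀ c i (r : ℕ), r < n → Add c (i - r - 1) (i + r) → ¬ Add c (i - r) (i + r + 1) →
    G^[n] c i = true

/-- If additivity around `i` breaks on the left at radius `r`, the left neighbour of `i` is 1. -/
lemma left_one {n : ℕ} (H : Desc n) (c : ℤ → Bool) (i : ℤ) (r : ℕ) (hr : r ≤ n)
    (ha : Add c (i - r) (i + r)) (hl : ¬ Add c (i - r - 1) (i + r)) :
    G^[n] c (i - 1) = true := by
  obtain ⟨c0, j, j1, j2, cj, hj⟩ := not_add_left ha hl
  by_cases hk : ∃ k, i - r ≤ k ∧ k ≤ i + r - 1 ∧ c k = true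
  · obtain ⟨k, k1, k2, ck⟩ := hk
    have hkj := ha.congr_mod k1 (by omega) j1 j2 ck cj
    obtain ⟨s, rfl⟩ : ∃ s, r = s + 1 := ⟨r - 1, by omega⟩
    push_cast at *
    refine H.left c (i - 1) s (by omega) ?_ (ha.mono (by omega) (by omega))
    intro h
    -- `k ≡ i - r (mod 2)` rules out `k = i + r - 1`, so `k` lies in the smaller interval
    have := h (i - (s + 1) - 1) k (by omega) (by omega) (by omega) c0 ck
    omega
  · push Not at hk
    have hz : ∀ k, i - r ≤ k → k ≤ i + r - 1 → c k = false := by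
      intro k h1 h2; simpa using hk k h1 h2
    have hjr : j = i + r := by
      by_contra hne
      have := hz j j1 (by omega)
      simp [this] at cj
    subst hjr
    have hL : L^[r] c (i - 1) = true := by
      apply L_left
      · rw [← c0]; congr 1; ring
      · intro k h1 h2; exact hz k (by omega) (by omega)
    have hadd : Add c (i - 1 - r) (i - 1 + r) := by
      intro p q h1 h2 h3 cp cq
      rw [hz q (by omega) (by omega)] at cq
      cases cq
    rcases hr.eq_or_lt with rfl | hr
    · rw [H.lin c _ hadd, hL]
    · have hR : ¬ Add c (i - 1 - r) (i - 1 + r + 1) := by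
        intro h
        have := h (i - r - 1) (i + r) (by omega) (by omega) (by omega) c0 cj
        omega
      by_cases hL' : Add c (i - 1 - r - 1) (i - 1 + r)
      · exact H.right c _ r hr hL' hR
      · rw [H.both c _ r hr hadd hL' hR, hL]

lemma right_one {n : ℕ} (H : Desc n) (c : ℤ → Bool) (i : ℤ) (r : ℕ) (hr : r ≤ n)
    (ha : Add c (i - r) (i + r)) (hl : ¬ Add c (i - r) (i + r + 1)) :
    G^[n] c (i + 1) = true := by
  have := left_one H (fun k => c (-k)) (-i) r hr
    (by rw [add_mirror]; convert ha using 1 <;> ring)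
    (by rw [add_mirror]; convert hl using 2 <;> ring)
  rw [G_mirror] at this
  rw [← this]; ring_nf

lemma step_left {n : ℕ} (H : Desc n) (c : ℤ → Bool) (i : ℤ) (r : ℕ) (hr : r ≤ n)
    (hl : ¬ Add c (i - r - 1) (i + r)) (ha : Add c (i - r) (i + r + 1)) :
    G^[n + 1] c i = true := by
  have ha' : Add c (i - r) (i + r) := ha.mono (by omega) (by omega)
  rw [G_succ, left_one H c i r hr ha' hl]
  rcases hr.eq_or_lt with rfl | hr
  · -- by parity, the right neighbour is 0 here
    have hR : G^[r] c (i + 1) = false := by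
      rw [H.lin c (i + 1) (ha.mono (by omega) (by omega))]
      by_contra hc
      obtain ⟨k, k1, k2, ck, hk⟩ := L_parity c r (i + 1) (by simpa using hc)
      obtain ⟨c0, j, j1, j2, cj, hj⟩ := not_add_left ha' hl
      have := ha.congr_mod (i := k) (j := j) (by omega) (by omega) (by omega) (by omega) ck cj
      omega
    rw [hR]
    cases G^[r] c i <;> rfl
  · rw [H.left c i r hr hl ha]
    cases G^[n] c (i + 1) <;> rfl

theorem main_rule (n : ℕ) : Desc n := by
  induction n with
  | zero =>
    exact ⟨fun _ _ _ => rfl, fun _ _ _ h => by omega, fun _ _ _ h => by omega,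
      fun _ _ _ h => by omega⟩
  | succ n H =>
    refine ⟨?_, ?_, ?_, ?_⟩
    · intro c i ha
      push_cast at ha
      rw [G_succ, L_succ, H.lin c i (ha.mono (by omega) (by omega)),
        H.lin c (i - 1) (ha.mono (by omega) (by omega)),
        H.lin c (i + 1) (ha.mono (by omega) (by omega))]
      -- the cells `i - 1` and `i` draw on different parity classes, so they are not both 1
      have : ¬ (L^[n] c (i - 1) = true ∧ L^[n] c i = true) := by
        rintro ⟨h1, h2⟩
        obtain ⟨k, k1, k2, ck, hk⟩ := L_parity c n _ h1
        obtain ⟨j, j1, j2, cj, hj⟩ := L_parity c n _ h2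
        have := ha.congr_mod (i := k) (j := j) (by omega) (by omega) (by omega) (by omega) ck cj
        omega
      revert this
      cases L^[n] c (i - 1) <;> cases L^[n] c i <;> cases L^[n] c (i + 1) <;> simp [rule218]
    · intro c i r hr ha hl hR
      rw [G_succ, left_one H c i r (by omega) ha hl, right_one H c i r (by omega) ha hR]
      have : G^[n] c i = L^[r] c i := by
        rcases (Nat.lt_succ_iff.mp hr).eq_or_lt with rfl | hr
        · exact H.lin c i ha
        · exact H.both c i r hr ha hl hR
      rw [this]
      cases L^[r] c i <;> rfl
    · intro c i r hr hl ha
      exact step_left H c i r (by omega) hl ha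
    · intro c i r hr ha hR
      have := step_left H (fun k => c (-k)) (-i) r (by omega)
        (by rw [add_mirror]; convert hR using 2 <;> ring)
        (by rw [add_mirror]; convert ha using 1 <;> ring)
      rwa [G_mirror, neg_neg] at this

/-! ### Words as configurations -/

/-- The configuration `…0 x_n … x_1 0 y_1 … y_m 0…`, with the central 0 at the origin; the word `X`
is read from left to right, so that `x_1` is its last letter. -/
def conf (X Y : List Bool) : ℤ → Bool := fun k =>
  if k < 0 then X.reverse.getD (-k - 1).toNat false
  else if k = 0 then false else Y.getD (k - 1).toNat false

lemma step218_length : ∀ w : List Bool, (step218 w).length = w.length - 2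
  | [] => rfl
  | [_] => rfl
  | [_, _] => rfl
  | a :: b :: c :: l => by
    rw [step218, List.length_cons, step218_length (b :: c :: l)]
    simp

lemma step218_getD : ∀ (w : List Bool) (k : ℕ), k + 2 < w.length →
    (step218 w).getD k false =
      rule218 (w.getD k false) (w.getD (k + 1) false) (w.getD (k + 2) false)
  | [], k, h => by simp at h
  | [_], k, h => by simp at h
  | [_, _], k, h => by simp at h
  | a :: b :: c :: l, 0, _ => by simp [step218]
  | a :: b :: c :: l, k + 1, h => by
    have := step218_getD (b :: c :: l) k (by simpa using h)
    rw [step218, List.getD_cons_succ, this]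
    rfl

lemma iterate_length (w : List Bool) (m : ℕ) :
    (step218^[m] w).length = w.length - 2 * m := by
  induction m with
  | zero => rfl
  | succ m ih => rw [Function.iterate_succ_apply', step218_length, ih]; omega

/-- The finite-window dynamics agree with the bi-infinite ones inside the light cone; `o` is the
position of the first letter of `w`. -/
lemma iterate_getD (w : List Bool) (c : ℤ → Bool) (o : ℤ)
    (h : ∀ k : ℕ, k < w.length → w.getD k false = c (o + k)) (m : ℕ) :
    ∀ k : ℕ, k + 2 * m < w.length → (step218^[m] w).getD k false = G^[m] c (o + k + m) := by
  induction m with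
  | zero => intro k hk; simpa using h k (by omega)
  | succ m ih =>
    intro k hk
    rw [Function.iterate_succ_apply', step218_getD _ _ (by rw [iterate_length]; omega),
      ih k (by omega), ih (k + 1) (by omega), ih (k + 2) (by omega), G_succ]
    push_cast; ring_nf

lemma iter218_eq (w : List Bool) (c : ℤ → Bool) (n : ℕ) (hw : w.length = 2 * n + 1)
    (h : ∀ k : ℕ, k < w.length → w.getD k false = c (-n + k)) :
    iter218 n w = G^[n] c 0 := by
  have h1 := iterate_getD w c (-n) h n 0 (by omega)
  have h2 : iter218 n w = (step218^[n] w).getD 0 false := by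
    unfold iter218; cases step218^[n] w <;> rfl
  rw [h2, h1]; simp

lemma getD_word (X Y : List Bool) (k : ℕ) :
    (X ++ false :: Y).getD k false = conf X Y (-X.length + k) := by
  unfold conf
  rcases lt_trichotomy k X.length with h | h | h
  · rw [if_pos (by omega), List.getD_append _ _ _ _ h,
      List.getD_eq_getElem _ _ h, List.getD_eq_getElem _ _ (by simp; omega), List.getElem_reverse]
    congr 1; omega
  · rw [if_neg (by omega), if_pos (by omega), List.getD_append_right _ _ _ _ (by omega)]
    simp [h]
  · rw [if_neg (by omega), if_neg (by omega), List.getD_append_right _ _ _ _ (by omega)]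
    obtain ⟨m, rfl⟩ : ∃ m, k = X.length + m + 1 := ⟨k - X.length - 1, by omega⟩
    rw [show X.length + m + 1 - X.length = m + 1 by omega, List.getD_cons_succ]
    congr 1; omega

lemma iter218_word (X Y : List Bool) (n : ℕ) (hX : X.length = n) (hY : Y.length = n) :
    iter218 n (X ++ false :: Y) = G^[n] (conf X Y) 0 := by
  apply iter218_eq
  · simp; omega
  · intro k _; rw [getD_word, hX]

lemma conf_neg (X Y Z : List Bool) {k : ℤ} (h : k ≤ 0) : conf X Y k = conf X Z k := by
  unfold conf; split_ifs <;> first | rfl | omega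

lemma conf_pos (X X' Y : List Bool) {k : ℤ} (h : 0 ≤ k) : conf X Y k = conf X' Y k := by
  unfold conf; split_ifs <;> first | rfl | omega

lemma conf_nil_pos (X : List Bool) {k : ℤ} (h : 0 ≤ k) : conf X [] k = false := by
  unfold conf; split_ifs <;> first | rfl | omega

lemma conf_nil_neg (Y : List Bool) {k : ℤ} (h : k ≤ 0) : conf [] Y k = false := by
  unfold conf; split_ifs <;> first | rfl | omega

lemma conf_split (X Y : List Bool) (k : ℤ) :
    conf X Y k = xor (conf X [] k) (conf [] Y k) := by
  rcases le_total k 0 with h | h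
  · rw [conf_nil_neg Y h, conf_neg X Y [] h, Bool.xor_false]
  · rw [conf_nil_pos X h, conf_pos X [] Y h, Bool.false_xor]

lemma conf_drop (X Y : List Bool) (s : ℕ) (hs : s ≤ X.length) {k : ℤ} (h : -s ≤ k) :
    conf (X.drop (X.length - s)) Y k = conf X Y k := by
  unfold conf
  split_ifs with h1 h2
  · rw [List.getD_eq_getElem _ _ (by simp; omega), List.getD_eq_getElem _ _ (by simp; omega),
      List.getElem_reverse, List.getElem_reverse, List.getElem_drop]
    congr 1
    simp only [List.length_drop]
    omega
  · rfl
  · rfl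

/-- Passing from consecutive 1s to arbitrary pairs of 1s. -/
lemma isAdditive_iff (w : List Bool) : IsAdditive w ↔
    ∀ i j, i < j → j < w.length → w.getD i false = true → w.getD j false = true →
      (j - i) % 2 = 0 := by
  constructor
  · intro h i j
    induction hd : j - i using Nat.strong_induction_on generalizing i j with
    | _ d ih =>
      intro h1 h2 h3 h4
      by_cases hz : ∀ t, i < t → t < j → w.getD t false = false
      · rw [← hd]; exact h i j h1 h2 h3 h4 hz
      · push Not at hz
        obtain ⟨t, t1, t2, ht⟩ := hz
        have ht : w.getD t false = true := by simpa using ht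
        have a1 := ih (t - i) (by omega) i t rfl t1 (by omega) h3 ht
        have a2 := ih (j - t) (by omega) t j rfl t2 h2 ht h4
        omega
  · intro h i j h1 h2 h3 h4 _
    exact h i j h1 h2 h3 h4

lemma isAdditive_drop (X : List Bool) (s : ℕ) (hs : s ≤ X.length) :
    IsAdditive (X.drop (X.length - s) ++ [false]) ↔ Add (conf X []) (-s) 0 := by
  have hlen : (X.drop (X.length - s)).length = s := by simp; omega
  have key : ∀ k : ℕ, (X.drop (X.length - s) ++ [false]).getD k false = conf X [] (-s + k) := by
    intro k
    rw [getD_word, hlen, conf_drop X [] s hs (by omega)]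
  rw [isAdditive_iff]
  simp only [key, List.length_append, hlen, List.length_singleton]
  constructor
  · intro h i j h1 h2 h3 ci cj
    have := h (i + s).toNat (j + s).toNat (by omega) (by omega)
      (by rw [← ci]; congr 1; omega) (by rw [← cj]; congr 1; omega)
    omega
  · intro h i j h1 h2 ci cj
    have := h _ _ (by omega) (by omega) (by omega) ci cj
    omega

/-! ### Alice's three quantities -/

lemma alpha_mem (X : List Bool) :
    alpha218 X ≤ X.length ∧ Add (conf X []) (-(alpha218 X : ℕ)) 0 := by
  have h : alpha218 X ∈
      {i | i ≤ X.length ∧ IsAdditive (X.drop (X.length - i) ++ [false])} := by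
    apply Nat.sSup_mem
    · refine ⟨0, by simp, ?_⟩
      rw [isAdditive_drop X 0 (by simp)]
      intro i j h1 h2 h3
      simp at h1
      omega
    · exact ⟨X.length, fun i hi => hi.1⟩
  exact ⟨h.1, (isAdditive_drop X _ h.1).1 h.2⟩

lemma le_alpha (X : List Bool) (s : ℕ) (hs : s ≤ X.length) :
    Add (conf X []) (-s) 0 ↔ s ≤ alpha218 X := by
  constructor
  · intro h
    exact le_csSup ⟨X.length, fun i hi => hi.1⟩ ⟨hs, (isAdditive_drop X s hs).2 h⟩
  · intro h
    exact (alpha_mem X).2.mono (by omega) le_rfl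

lemma getD_left (X Y : List Bool) (i : ℕ) (h1 : 1 ≤ i) (h2 : i ≤ X.length) :
    X.getD (X.length - i) false = conf X Y (-i) := by
  have := getD_word X Y (X.length - i)
  rw [List.getD_append _ _ _ _ (by omega)] at this
  rw [this]; congr 1; omega

lemma ell_le (X : List Bool) : ell218 X ≤ X.length := by
  unfold ell218
  rcases Set.eq_empty_or_nonempty
    {i | 1 ≤ i ∧ i ≤ X.length ∧ X.getD (X.length - i) false = true} with h | h
  · rw [h]; simp
  · exact (Nat.sInf_mem h).2.1

lemma ell_spec (X Y : List Bool) (h : 1 ≤ ell218 X) : conf X Y (-(ell218 X : ℕ)) = true := by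
  have hne : {i | 1 ≤ i ∧ i ≤ X.length ∧ X.getD (X.length - i) false = true}.Nonempty := by
    by_contra hc
    rw [Set.not_nonempty_iff_eq_empty] at hc
    unfold ell218 at h
    rw [hc] at h
    simp at h
  have : 1 ≤ ell218 X ∧ ell218 X ≤ X.length ∧
      X.getD (X.length - ell218 X) false = true := Nat.sInf_mem hne
  rw [← getD_left X Y _ this.1 this.2.1]
  exact this.2.2

lemma ell_min (X Y : List Bool) (i : ℕ) (h1 : 1 ≤ i) (h2 : i ≤ X.length)
    (h : conf X Y (-i) = true) : 1 ≤ ell218 X ∧ ell218 X ≤ i := by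
  have hm : i ∈ {i | 1 ≤ i ∧ i ≤ X.length ∧ X.getD (X.length - i) false = true} :=
    ⟨h1, h2, by rw [getD_left X Y i h1 h2]; exact h⟩
  exact ⟨(Nat.sInf_mem ⟨i, hm⟩).1, Nat.sInf_le hm⟩

lemma aVal_eq (X : List Bool) : aVal218 X = L^[alpha218 X] (conf X []) 0 := by
  obtain ⟨h1, h2⟩ := alpha_mem X
  have hlen : (X.drop (X.length - alpha218 X)).length = alpha218 X := by simp; omega
  have e : aVal218 X = G^[alpha218 X] (conf X []) 0 := by
    unfold aVal218
    apply iter218_eq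
    · simp; omega
    · intro k _
      rw [List.append_assoc, List.singleton_append, getD_word, hlen]
      rcases le_total (-(alpha218 X : ℤ) + k) 0 with h | h
      · rw [conf_neg _ _ [] h, conf_drop X [] _ h1 (by omega)]
      · rw [conf_nil_pos X h]
        unfold conf
        split_ifs
        · omega
        · rfl
        · rw [List.getD_eq_getElem?_getD, List.getElem?_replicate]
          split_ifs <;> rfl
  rw [e]
  apply (main_rule _).lin
  intro i j i1 i2 i3 ci cj
  rcases le_total 0 j with h | h
  · rw [conf_nil_pos X h] at cj; cases cj
  · exact h2 i j (by omega) i2 h ci cj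

/-- Additivity of `x_s … x_1 0 y_1 … y_t` depends on `x` only through `α(x)` and `l(x)`. -/
lemma additive_transfer (X X' Y : List Bool) (hlen : X.length = X'.length)
    (hα : alpha218 X = alpha218 X') (hl : ell218 X = ell218 X') (s : ℕ) (t : ℤ)
    (hs : s ≤ X.length) (ht : 0 ≤ t) (h : Add (conf X Y) (-s) t) :
    Add (conf X' Y) (-s) t := by
  have hX : Add (conf X []) (-s) 0 := by
    intro i j h1 h2 h3 ci cj
    rw [conf_neg X [] Y (by omega)] at ci cj
    exact h i j h1 h2 (by omega) ci cj
  have hX' : Add (conf X' []) (-s) 0 := by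
    rw [le_alpha _ _ (by omega), ← hα, ← le_alpha _ _ hs]; exact hX
  intro i j h1 h2 h3 ci cj
  rcases le_or_gt j 0 with hj | hj
  · rw [conf_neg X' Y [] (by omega)] at ci cj
    exact hX' i j h1 h2 hj ci cj
  rcases le_or_gt 0 i with hi | hi
  · rw [conf_pos X' X Y (by omega)] at ci cj
    exact h i j h1 h2 h3 ci cj
  -- the pair straddles the centre: compare both 1s with the one at position `-l`
  obtain ⟨m, rfl⟩ : ∃ m : ℕ, i = -m := ⟨(-i).toNat, by omega⟩
  obtain ⟨l1, l2⟩ := ell_min X' Y m (by omega) (by omega) ci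
  have e' := ell_spec X' [] l1
  have e := ell_spec X Y (hl ▸ l1)
  rw [hl] at e
  rw [conf_pos X' X Y (by omega)] at cj
  rw [conf_neg X' Y [] (by omega)] at ci
  have p1 := h _ j (by omega) (by omega) h3 e cj
  have p2 := hX'.congr_mod (by omega) (by omega) (by omega) (by omega) ci e'
  omega

theorem same_value (n : ℕ) (x xt : List Bool) (hx : x.length = n) (hxt : xt.length = n)
    (hα : alpha218 x = alpha218 xt) (hl : ell218 x = ell218 xt) (ha : aVal218 x = aVal218 xt)
    (y : List Bool) (hy : y.length = n) :
    iter218 n (x ++ false :: y) = iter218 n (xt ++ false :: y) := by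
  rw [iter218_word x y n hx hy, iter218_word xt y n hxt hy]
  have T : ∀ (s : ℕ) (t : ℤ), s ≤ n → 0 ≤ t →
      (Add (conf x y) (-s) t ↔ Add (conf xt y) (-s) t) := fun s t hs ht =>
    ⟨additive_transfer x xt y (by omega) hα hl s t (by omega) ht,
      additive_transfer xt x y (by omega) hα.symm hl.symm s t (by omega) ht⟩
  have S : ∀ r : ℕ, L^[r] (conf x []) 0 = L^[r] (conf xt []) 0 →
      L^[r] (conf x y) 0 = L^[r] (conf xt y) 0 := by
    intro r h
    rw [L_xor _ _ _ (conf_split x y), L_xor _ _ _ (conf_split xt y), h]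
  have A : L^[alpha218 x] (conf x []) 0 = L^[alpha218 x] (conf xt []) 0 := by
    rw [← aVal_eq, ha, aVal_eq, hα]
  have H := main_rule n
  by_cases hn : Add (conf x y) (-n) n
  · have hn' := (T n n le_rfl (by omega)).1 hn
    rw [H.lin _ _ (by simpa using hn), H.lin _ _ (by simpa using hn')]
    apply S
    have hαn : alpha218 x = n := by
      apply le_antisymm (hx ▸ (alpha_mem x).1)
      rw [← le_alpha x n hx.ge]
      intro i j h1 h2 h3 ci cj
      rw [conf_neg x [] y (by omega)] at ci cj
      exact hn i j h1 h2 (by omega) ci cj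
    rw [hαn] at A
    exact A
  -- the largest `r` such that `[-r, r]` is additive
  obtain ⟨r, hr, hadd, hnadd⟩ : ∃ r : ℕ, r < n ∧ Add (conf x y) (-r) r ∧
      ¬ Add (conf x y) (-(r + 1 : ℕ)) (r + 1 : ℕ) := by
    classical
    have hex : ∃ m : ℕ, ¬ Add (conf x y) (-m) m := ⟨n, hn⟩
    have h0 : Nat.find hex ≠ 0 := by
      intro h
      have := Nat.find_spec hex
      rw [h] at this
      apply this
      intro i j h1 h2 h3
      simp at h1 h3
      omega
    obtain ⟨r, hr⟩ := Nat.exists_eq_succ_of_ne_zero h0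
    refine ⟨r, ?_, ?_, ?_⟩
    · have := Nat.find_min' hex hn
      omega
    · have := Nat.find_min hex (m := r) (by omega)
      simpa using this
    · have := Nat.find_spec hex
      rw [hr] at this
      exact this
  have eL : (-((r + 1 : ℕ) : ℤ)) = 0 - r - 1 := by push_cast; ring
  have eR : (((r + 1 : ℕ) : ℤ)) = 0 + r + 1 := by push_cast; ring
  have T0 := T r r (by omega) (by omega)
  have TL := T (r + 1) r (by omega) (by omega)
  have TR := T r (r + 1 : ℕ) (by omega) (by omega)
  have hadd' := T0.1 hadd
  rw [eL] at TL
  rw [eR] at TR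
  rw [eL, eR] at hnadd
  rw [show (-(r : ℤ)) = 0 - r by ring] at TR hadd hadd'
  rw [show (r : ℤ) = 0 + r by ring] at TL hadd hadd'
  simp only [show (0 : ℤ) - (0 + r) = 0 - r by ring] at TL hadd hadd'
  by_cases hL : Add (conf x y) (0 - r - 1) (0 + r)
  · by_cases hR : Add (conf x y) (0 - r) (0 + r + 1)
    · exfalso
      apply hnadd
      intro i j h1 h2 h3 ci cj
      by_cases hi : i = 0 - r - 1
      · by_cases hj : j = 0 + r + 1
        · omega
        · exact hL i j h1 h2 (by omega) ci cj
      · exact hR i j (by omega) h2 h3 ci cj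
    · rw [H.right _ _ r hr hL hR, H.right _ _ r hr (TL.1 hL) (fun h => hR (TR.2 h))]
  · by_cases hR : Add (conf x y) (0 - r) (0 + r + 1)
    · rw [H.left _ _ r hr hL hR, H.left _ _ r hr (fun h => hL (TL.2 h)) (TR.1 hR)]
    · rw [H.both _ _ r hr hadd hL hR,
        H.both _ _ r hr hadd' (fun h => hL (TL.2 h)) (fun h => hR (TR.2 h))]
      apply S
      have hrα : r ≤ alpha218 x := by
        rw [← le_alpha x r (by omega)]
        intro i j h1 h2 h3 ci cj
        rw [conf_neg x [] y (by omega)] at ci cj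
        exact hadd i j (by omega) h2 (by omega) ci cj
      rcases hrα.eq_or_lt with h | h
      · rw [← h] at A; exact A
      · -- additivity breaks because of a 1 of `y`, so `x_1, …, x_r` vanish
        obtain ⟨c0, j, j1, j2, cj, hj⟩ := not_add_left hadd hL
        have hz : Add (conf x []) (-(r + 1 : ℕ)) 0 := by rw [le_alpha _ _ (by omega)]; omega
        have e0 : conf x y (-(r + 1 : ℕ)) = true := by rw [eL]; exact c0
        have hell : ell218 x = r + 1 := by
          obtain ⟨l1, l2⟩ := ell_min x y (r + 1) (by omega) (by omega) e0
          by_contra hne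
          have e := ell_spec x y l1
          have p1 := hadd.congr_mod (by omega) (by omega) j1 j2 e cj
          rw [conf_neg x y [] (by omega)] at e0 e
          have p2 := hz.congr_mod (by omega) (by omega) (by omega) (by omega) e0 e
          push_cast at p2
          omega
        have Z : ∀ X : List Bool, X.length = n → ell218 X = r + 1 →
            L^[r] (conf X []) 0 = false := by
          intro X hX hE
          apply L_zero
          intro k k1 k2
          rcases le_or_gt 0 k with hk | hk
          · exact conf_nil_pos X hk
          · by_contra hc
            obtain ⟨m, rfl⟩ : ∃ m : ℕ, k = -m := ⟨(-k).toNat, by omega⟩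
            have := ell_min X [] m (by omega) (by omega) (by simpa using hc)
            omega
        rw [Z x hx hell, Z xt hxt (hl ▸ hell)]

end Rule218

/-- For rule 218 with central cell 0 there is a one-round protocol of cost
`2⌈log₂ n⌉ + 1`: Alice's answer is determined by `α(x)`, `l(x)` and `a(x)`; if two
inputs `x, x̃` agree on these three quantities then `fⁿ(x·0·y) = fⁿ(x̃·0·y)` for all
`y`.  Consequently, the matrix `(x,y) ↦ fⁿ(x·0·y)` has at most `2(n+1)²` distinct
rows. -/
theorem rule218_protocol (n : ℕ) :
    (∀ x xt : List Bool, x.length = n → xt.length = n →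
      alpha218 x = alpha218 xt → ell218 x = ell218 xt → aVal218 x = aVal218 xt →
      ∀ y : List Bool, y.length = n →
        iter218 n (x ++ false :: y) = iter218 n (xt ++ false :: y)) ∧
    Set.ncard { g : {y : List Bool // y.length = n} → Bool |
        ∃ x : List Bool, x.length = n ∧ g = fun y => iter218 n (x ++ false :: y.1) }
      ≤ 2 * (n + 1) ^ 2 := by 
  refine ⟨fun x xt hx hxt h1 h2 h3 y hy =>
    Rule218.same_value n x xt hx hxt h1 h2 h3 y hy, ?_⟩
  classical
  -- the row determined by a triple `(α, l, a)`; the value is irrelevant for triples that do not occur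
  let row : ℕ × ℕ × Bool → {y : List Bool // y.length = n} → Bool := fun p =>
    if h : ∃ x : List Bool, x.length = n ∧ (alpha218 x, ell218 x, aVal218 x) = p then
      fun y => iter218 n (h.choose ++ false :: y.1)
    else fun _ => false
  let T : Finset (ℕ × ℕ × Bool) := Finset.range (n + 1) ×ˢ Finset.range (n + 1) ×ˢ Finset.univ
  have hsub : { g : {y : List Bool // y.length = n} → Bool |
      ∃ x : List Bool, x.length = n ∧ g = fun y => iter218 n (x ++ false :: y.1) } ⊆
      ((T.image row : Finset _) : Set _) := by
    rintro g ⟨x, hx, rfl⟩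
    rw [Finset.coe_image]
    refine ⟨(alpha218 x, ell218 x, aVal218 x), ?_, ?_⟩
    · have h1 := (Rule218.alpha_mem x).1
      have h2 := Rule218.ell_le x
      simp only [T, Finset.coe_product, Set.mem_prod, Finset.mem_coe, Finset.mem_range,
        Finset.mem_univ, and_true]
      omega
    · have h : ∃ x' : List Bool, x'.length = n ∧
          (alpha218 x', ell218 x', aVal218 x') = (alpha218 x, ell218 x, aVal218 x) := ⟨x, hx, rfl⟩
      funext y
      simp only [row, dif_pos h]
      obtain ⟨h1, h2⟩ := h.choose_spec
      obtain ⟨e1, e2⟩ := Prod.mk.inj h2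
      obtain ⟨e2, e3⟩ := Prod.mk.inj e2
      exact Rule218.same_value n _ x h1 hx e1 e2 e3 y.1 y.2
  calc _ ≤ ((T.image row : Finset _) : Set _).ncard :=
        Set.ncard_le_ncard hsub (Finset.finite_toSet _)
    _ = (T.image row).card := Set.ncard_coe_finset _
    _ ≤ T.card := Finset.card_image_le
    _ = 2 * (n + 1) ^ 2 := by
        simp only [T, Finset.card_product, Finset.card_range, Finset.card_univ, Fintype.card_bool]
        ring
end

section
/- For rule 218 with central cell 0, words from different sets S_{2k+1} index different rows: for every n and all k ≠ k̃ with k, k̃ ≥ 1, 2k+1 ≤ n and 2k̃+1 ≤ n, if x ∈ S_{2k+1} and x̃ ∈ S_{2k̃+1}, then there exists y ∈ {0,1}^n such that f^n(x·0·y) ≠ f^n(x̃·0·y). -/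
/-- The set `S_{2k+1} = {1^{n-2k-1} 0^{2k+1}} ∪
`{1^{n-2k-1} 0^a 1 0^b : a, b odd, b ≥ 3, a + b = 2k}` of words of length `n`
(written `x_n … x_1` left to right). -/
def S218 (n k : ℕ) : Set (List Bool) :=
  {List.replicate (n - (2 * k + 1)) true ++ List.replicate (2 * k + 1) false} ∪
  { w | ∃ a b : ℕ, a % 2 = 1 ∧ b % 2 = 1 ∧ 3 ≤ b ∧ a + b = 2 * k ∧
      w = List.replicate (n - (2 * k + 1)) true ++ List.replicate a false ++ [true] ++
        List.replicate b false }

/-- One step of rule 218 on a one-sided infinite sequence; as for `step218`, the new cell `j` is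
computed from the old cells `j`, `j + 1`, `j + 2`. -/
def seqStep (g : ℕ → Bool) : ℕ → Bool := fun j => rule218 (g j) (g (j + 1)) (g (j + 2))

lemma step218_length (l : List Bool) : (step218 l).length = l.length - 2 := by
  fun_induction step218 l with
  | case1 a b c l ih => simp [ih]
  | case2 l h =>
    match l with
    | [] => rfl
    | [_] => rfl
    | [_, _] => rfl
    | a :: b :: c :: l => exact absurd rfl (h a b c l)

lemma step218_getD (l : List Bool) (j : ℕ) (hj : j + 2 < l.length) :
    (step218 l).getD j false = seqStep (fun i => l.getD i false) j := by
  fun_induction step218 l generalizing j with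
  | case1 a b c l ih =>
    cases j with
    | zero => simp [seqStep]
    | succ j =>
      have := ih j (by simpa using hj)
      simpa [seqStep] using this
  | case2 l h =>
    match l, hj, h with
    | a :: b :: c :: l, _, h => exact absurd rfl (h a b c l)

lemma iterate_step218_getD (t : ℕ) (l : List Bool) (j : ℕ) (hj : j + 2 * t < l.length) :
    (step218^[t] l).getD j false = (seqStep^[t] (fun i => l.getD i false)) j := by
  induction t generalizing j with
  | zero => rfl
  | succ t ih =>
    have hlen : ∀ t, (step218^[t] l).length = l.length - 2 * t := by
      intro t
      induction t with
      | zero => rfl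
      | succ t iht => rw [Function.iterate_succ_apply', step218_length, iht]; omega
    rw [Function.iterate_succ_apply', Function.iterate_succ_apply',
      step218_getD _ _ (by rw [hlen]; omega)]
    simp only [seqStep]
    rw [ih j (by omega), ih (j + 1) (by omega), ih (j + 2) (by omega)]

lemma iter218_eq (n : ℕ) (l : List Bool) (hl : l.length = 2 * n + 1) :
    iter218 n l = (seqStep^[n] (fun i => l.getD i false)) 0 := by
  rw [← iterate_step218_getD n l 0 (by omega), iter218]
  cases step218^[n] l <;> rfl

lemma center_of_palindrome (n : ℕ) (g : ℕ → Bool) (hsymm : ∀ i j, i + j = 2 * n → g i = g j)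
    (hc : g n = false) : (seqStep^[n] g) 0 = false := by
  induction n generalizing g with
  | zero => exact hc
  | succ n ih =>
    rw [Function.iterate_succ_apply]
    apply ih
    · intro i j hij
      simp only [seqStep]
      rw [hsymm i (j + 2) (by omega), hsymm (i + 1) (j + 1) (by omega),
        hsymm (i + 2) j (by omega)]
      cases g j <;> cases g (j + 1) <;> cases g (j + 2) <;> rfl
    · simp only [seqStep]
      rw [hsymm n (n + 2) (by omega), hc]
      cases g (n + 2) <;> rfl

/-- The block of ones on the indices `< q` survives `m` steps, hence moves `m` cells to the right
relative to the initial positions, provided the cells `q + 1, q + 3, …` are `0` far enough. -/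
lemma wall_advances (m q : ℕ) (g : ℕ → Bool) (h1 : ∀ j < q, g j = true)
    (h0 : ∀ s < m, g (q + 1 + 2 * s) = false) :
    ∀ j < q, (seqStep^[m] g) j = true := by
  induction m generalizing g with
  | zero => exact h1
  | succ m ih =>
    rw [Function.iterate_succ_apply]
    apply ih
    · intro j hj
      simp only [seqStep]
      rw [h1 j hj]
      obtain h | h := Nat.lt_or_ge (j + 1) q
      · rw [h1 _ h]
        cases g (j + 2) <;> rfl
      · have h2 : g (j + 2) = false := by
          have := h0 0 (by omega)
          rwa [show q + 1 + 2 * 0 = j + 2 by omega] at this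
        rw [h2]
        cases g (j + 1) <;> rfl
    · intro s hs
      have h2 := h0 s (by omega)
      have h3 := h0 (s + 1) (by omega)
      rw [show q + 1 + 2 * (s + 1) = q + 1 + 2 * s + 2 by ring] at h3
      simp only [seqStep]
      rw [h2, h3]
      cases g (q + 1 + 2 * s + 1) <;> rfl

lemma ones_persist (u : ℕ) (g : ℕ → Bool) (h1 : ∀ j < u + 1, g j = true) :
    (seqStep^[u] g) 0 = true := by
  induction u generalizing g with
  | zero => exact h1 0 (by omega)
  | succ u ih =>
    rw [Function.iterate_succ_apply]
    apply ih
    intro j hj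
    simp only [seqStep]
    rw [h1 j (by omega), h1 (j + 1) (by omega)]
    cases g (j + 2) <;> rfl

lemma center_of_wall (m u : ℕ) (g : ℕ → Bool) (h1 : ∀ j < u + 1, g j = true)
    (h0 : ∀ s < m, g (u + 2 + 2 * s) = false) :
    (seqStep^[u + m] g) 0 = true := by
  rw [Function.iterate_add_apply]
  apply ones_persist
  apply wall_advances m (u + 1) g h1
  intro s hs
  exact h0 s hs

/-- All that is used about the words of `S_{2k+1}`: after the leading ones, the letters at even
offset vanish, because the additional `1` sits at the odd offset `a`. -/
lemma S218_letters (n k : ℕ) (hkn : 2 * k + 1 ≤ n) (x : List Bool) (hx : x ∈ S218 n k) :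
    x.length = n ∧ (∀ j < n - (2 * k + 1), x.getD j false = true) ∧
      ∀ s ≤ k, x.getD (n - (2 * k + 1) + 2 * s) false = false := by
  rcases hx with hx | ⟨a, b, ha, hb, hb3, hab, hx⟩
  · rw [Set.mem_singleton_iff] at hx
    subst hx
    refine ⟨by simp; omega, ?_, ?_⟩
    · intro j hj
      rw [List.getD_eq_getElem _ _ (by simp; omega)]
      simp [hj]
    · intro s hs
      rw [List.getD_eq_getElem _ _ (by simp; omega)]
      simp
  · subst hx
    refine ⟨by simp; omega, ?_, ?_⟩
    · intro j hj
      rw [List.getD_eq_getElem _ _ (by simp; omega)]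
      simp [hj]
    · intro s hs
      rw [List.getD_eq_getElem _ _ (by simp; omega)]
      simp only [List.getElem_append, List.getElem_replicate, List.length_append,
        List.length_replicate, List.length_singleton]
      split_ifs <;> first | rfl | (exfalso; omega)

lemma iter218_palindrome (n : ℕ) (x : List Bool) (hx : x.length = n) :
    iter218 n (x ++ false :: x.reverse) = false := by
  have hlen : (x ++ false :: x.reverse).length = 2 * n + 1 := by simp; omega
  have hrev : (x ++ false :: x.reverse).reverse = x ++ false :: x.reverse := by simp
  rw [iter218_eq n _ hlen]
  apply center_of_palindrome
  · intro i j hij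
    rw [List.getD_eq_getElem _ _ (by omega), List.getD_eq_getElem _ _ (by omega)]
    conv_lhs => rw [List.getElem_of_eq hrev.symm, List.getElem_reverse]
    congr 1
    omega
  · simp [← hx]

lemma rule218_rows_of_lt (n k kt : ℕ) (hkn : 2 * k + 1 ≤ n) (hktn : 2 * kt + 1 ≤ n)
    (hlt : k < kt) (x xt : List Bool) (hx : x ∈ S218 n k) (hxt : xt ∈ S218 n kt) :
    ∃ y : List Bool, y.length = n ∧
      iter218 n (x ++ false :: y) ≠ iter218 n (xt ++ false :: y) := by
  obtain ⟨hl, hx1, hx0⟩ := S218_letters n k hkn x hx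
  obtain ⟨hlt', -, hxt0⟩ := S218_letters n kt hktn xt hxt
  refine ⟨xt.reverse, by simp [hlt'], ?_⟩
  rw [iter218_palindrome n xt hlt', iter218_eq n _ (by simp; omega)]
  -- `2k+3` steps for the block of ones to reach the centre, then it only has to persist
  obtain ⟨u, rfl⟩ : ∃ u, n = u + (2 * k + 3) := ⟨n - (2 * k + 3), by omega⟩
  rw [center_of_wall]
  · simp
  · intro j hj
    rw [List.getD_append _ _ _ _ (by omega)]
    exact hx1 j (by omega)
  · intro s hs
    obtain h | h := Nat.lt_or_ge k s
    · -- offset `s > k` is the letter `y_{2(s-k)-1}` of `xt.reverse`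
      rw [List.getD_append_right _ _ _ _ (by omega), hl,
        show u + 2 + 2 * s - (u + (2 * k + 3)) = 2 * (s - k - 1) + 1 by omega,
        List.getD_cons_succ, List.getD_eq_getElem _ _ (by simp; omega), List.getElem_reverse]
      have := hxt0 (kt - (s - k - 1)) (by omega)
      rw [List.getD_eq_getElem _ _ (by omega)] at this
      rw [← this]
      congr 1
      omega
    · rw [List.getD_append _ _ _ _ (by omega)]
      have := hx0 s h
      rwa [show u + (2 * k + 3) - (2 * k + 1) + 2 * s = u + 2 + 2 * s by omega] at this

/-- For rule 218 with central cell 0, words from different sets `S_{2k+1}` index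
different rows of the matrix `(x,y) ↦ fⁿ(x·0·y)`. -/
theorem rule218_rows_distinct_between_levels (n k kt : ℕ)
    (hk : 1 ≤ k) (hkt : 1 ≤ kt) (hkn : 2 * k + 1 ≤ n) (hktn : 2 * kt + 1 ≤ n)
    (hne : k ≠ kt) (x xt : List Bool) (hx : x ∈ S218 n k) (hxt : xt ∈ S218 n kt) :
    ∃ y : List Bool, y.length = n ∧
      iter218 n (x ++ false :: y) ≠ iter218 n (xt ++ false :: y) := by
  obtain h | h := Nat.lt_or_gt_of_ne hne
  · exact rule218_rows_of_lt n k kt hkn hktn h x xt hx hxt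
  · obtain ⟨y, hy, hyne⟩ := rule218_rows_of_lt n kt k hktn hkn h xt x hxt hx
    exact ⟨y, hy, hyne.symm⟩
end

section
/- Quadratic lower bound for rule 218 with central cell 0: for every n, the rows of the matrix (x,y) ↦ f^n(x·0·y) indexed by the elements of the union ⋃_{k=1}^{K} S_{2k+1}, where K = ⌊(n−1)/2⌋, are pairwise distinct. Since the sets S_{2k+1} are pairwise disjoint and |S_{2k+1}| = k, the matrix has at least K(K+1)/2 distinct rows; in particular, the one-round communication complexity ⌈log₂(number of distinct rows)⌉ is at least 2⌈log₂ n⌉ − 5. -/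
/-- Rule 218 on bi-infinite configurations: the state of cell `i` at time `t`, started from `c`. -/
def ca218 (c : ℤ → Bool) : ℕ → ℤ → Bool
  | 0, i => c i
  | t + 1, i => rule218 (ca218 c t (i - 1)) (ca218 c t i) (ca218 c t (i + 1))

/-- The word of length `l` read off the configuration `c` from cell `s` on. -/
def word218 (c : ℤ → Bool) : ℤ → ℕ → List Bool
  | _, 0 => []
  | s, l + 1 => c s :: word218 c (s + 1) l

/-- The left half configuration with ones exactly at `-(b+1)` and at all cells `≤ -(2k+2)`. -/
def row218 (k b : ℕ) (i : ℤ) : Bool := decide (i = -(b + 1) ∨ i ≤ -(2 * k + 2))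

/-- The configuration equal to the row `(k, b)` on negative cells and to `Y` elsewhere. -/
def join218 (k b : ℕ) (Y : ℤ → Bool) (i : ℤ) : Bool := if i < 0 then row218 k b i else Y i

/-! ### Finite words and bi-infinite configurations -/

theorem length_word218 (c : ℤ → Bool) (s : ℤ) (l : ℕ) : (word218 c s l).length = l := by
  induction l generalizing s with
  | zero => rfl
  | succ l ih => simp [word218, ih]

theorem word218_congr {c d : ℤ → Bool} {s : ℤ} {l : ℕ}
    (h : ∀ i, s ≤ i → i < s + l → c i = d i) : word218 c s l = word218 d s l := by
  induction l generalizing s with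
  | zero => rfl
  | succ l ih =>
    simp only [word218]
    rw [h s le_rfl (by push_cast; omega),
      ih (fun i h1 h2 => h i (by omega) (by push_cast; omega))]

theorem word218_add (c : ℤ → Bool) (s : ℤ) (m l : ℕ) :
    word218 c s (m + l) = word218 c s m ++ word218 c (s + m) l := by
  induction m generalizing s with
  | zero => simp [word218]
  | succ m ih =>
    rw [show m + 1 + l = (m + l) + 1 by omega]
    simp only [word218, ih, List.cons_append]
    congr 3
    push_cast
    ring

theorem word218_const {c : ℤ → Bool} {s : ℤ} {l : ℕ} {v : Bool}
    (h : ∀ i, s ≤ i → i < s + l → c i = v) : word218 c s l = List.replicate l v := by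
  induction l generalizing s with
  | zero => rfl
  | succ l ih =>
    simp only [word218, List.replicate_succ]
    rw [h s le_rfl (by push_cast; omega),
      ih (fun i h1 h2 => h i (by omega) (by push_cast; omega))]

theorem step218_word218 (c : ℤ → Bool) (t : ℕ) (s : ℤ) (l : ℕ) :
    step218 (word218 (ca218 c t) s (l + 2)) = word218 (ca218 c (t + 1)) (s + 1) l := by
  induction l generalizing s with
  | zero => simp [word218, step218]
  | succ l ih =>
    have h := ih (s + 1)
    simp only [word218, step218] at h ⊢
    rw [h]
    simp [ca218]

theorem iterate_step218 (c : ℤ → Bool) (s : ℤ) (l t : ℕ) :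
    step218^[t] (word218 c s (l + 2 * t)) = word218 (ca218 c t) (s + t) l := by
  induction t generalizing l with
  | zero => simp; rfl
  | succ t ih =>
    rw [Function.iterate_succ_apply', show l + 2 * (t + 1) = (l + 2) + 2 * t by ring, ih,
      step218_word218]
    congr 1
    push_cast
    ring

theorem iter218_join (n k b : ℕ) (Y : ℤ → Bool) (hY : Y 0 = false) :
    iter218 n (word218 (row218 k b) (-n) n ++ false :: word218 Y 1 n) =
      ca218 (join218 k b Y) n 0 := by
  have h : word218 (row218 k b) (-n) n ++ false :: word218 Y 1 n =
      word218 (join218 k b Y) (-n) (1 + 2 * n) := by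
    rw [show 1 + 2 * n = n + (n + 1) by ring, word218_add]
    congr 1
    · apply word218_congr
      intro i _ h2
      simp [join218, show i < 0 by omega]
    · simp only [word218]
      rw [show -(n : ℤ) + n = 0 by ring]
      congr 1
      · simp [join218, hY]
      · apply word218_congr
        intro i h1 _
        simp [join218, show ¬ i < 0 by omega]
  rw [h, iter218, iterate_step218]
  simp [word218]

/-! ### Dynamics -/

theorem ca_wall {c : ℤ → Bool} {i : ℤ} {t s : ℕ} (hts : t ≤ s) (h0 : ca218 c t i = true)
    (h1 : ca218 c t (i + 1) = true) : ca218 c s i = true ∧ ca218 c s (i + 1) = true := by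
  induction s, hts using Nat.le_induction with
  | base => exact ⟨h0, h1⟩
  | succ s _ ih =>
    obtain ⟨a, b⟩ := ih
    simp only [ca218, add_sub_cancel_right, a, b]
    constructor
    · cases ca218 c s (i - 1) <;> rfl
    · cases ca218 c s (i + 1 + 1) <;> rfl

/-- The rightmost one of a pattern followed by zeros moves to the right at speed one. -/
theorem ca_front {c : ℤ → Bool} {p r : ℤ} (hp : c p = true)
    (hz : ∀ i, p < i → i ≤ r → c i = false) (t : ℕ) (ht : p + 2 * t ≤ r) :
    (∀ j, j = p + t → ca218 c t j = true) ∧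
      ∀ j, p + t < j → j ≤ r - t → ca218 c t j = false := by
  induction t with
  | zero =>
    refine ⟨fun j hj => ?_, fun j h1 h2 => hz j (by simpa using h1) (by simpa using h2)⟩
    simpa [ca218, hj] using hp
  | succ t ih =>
    push_cast at ht
    obtain ⟨a, b⟩ := ih (by omega)
    refine ⟨fun j hj => ?_, fun j h1 h2 => ?_⟩
    · push_cast at hj
      rw [ca218, a (j - 1) (by omega), b j (by omega) (by omega), b (j + 1) (by omega) (by omega)]
      rfl
    · push_cast at h1 h2
      rw [ca218, b (j - 1) (by omega) (by omega), b j (by omega) (by omega),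
        b (j + 1) (by omega) (by omega)]
      rfl

/-- The pattern `1 0 1 1 1` at cell `q`, preceded by zeros on `[l, q)`, moves to the left at speed
one: at even times it looks the same, and at odd times it is `1 0 0 1 1`. -/
theorem ca_glider {c : ℤ → Bool} {l q : ℤ} (hz : ∀ i, l ≤ i → i < q → c i = false)
    (h0 : c q = true) (h1 : c (q + 1) = false) (h2 : c (q + 2) = true) (h3 : c (q + 3) = true)
    (h4 : c (q + 4) = true) (t : ℕ) (ht : l + 2 * t ≤ q) :
    (∀ j, l + t ≤ j → j < q - t → ca218 c t j = false) ∧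
    (∀ j, j = q - t → ca218 c t j = true) ∧
    (∀ j, j = q - t + 1 → ca218 c t j = false) ∧
    (∀ j, j = q - t + 2 → ca218 c t j = decide (t % 2 = 0)) ∧
    (∀ j, j = q - t + 3 → ca218 c t j = true) ∧
    (∀ j, j = q - t + 4 → ca218 c t j = true) := by
  induction t with
  | zero => simpa [ca218] using ⟨hz, h0, h1, h2, h3, h4⟩
  | succ t ih =>
    push_cast at ht
    obtain ⟨a, a0, a1, a2, a3, a4⟩ := ih (by omega)
    push_cast
    refine ⟨fun j h h' => ?_, fun j h => ?_, fun j h => ?_, fun j h => ?_, fun j h => ?_,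
      fun j h => ?_⟩
    · rw [ca218, a (j - 1) (by omega) (by omega), a j (by omega) (by omega),
        a (j + 1) (by omega) (by omega)]
      rfl
    · rw [ca218, a (j - 1) (by omega) (by omega), a j (by omega) (by omega), a0 (j + 1) (by omega)]
      rfl
    · rw [ca218, a (j - 1) (by omega) (by omega), a0 j (by omega), a1 (j + 1) (by omega)]
      rfl
    · rw [ca218, a0 (j - 1) (by omega), a1 j (by omega), a2 (j + 1) (by omega)]
      rcases Nat.mod_two_eq_zero_or_one t with e | e
      · simp [e, show (t + 1) % 2 = 1 by omega, rule218]
      · simp [e, show (t + 1) % 2 = 0 by omega, rule218]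
    · rw [ca218, a1 (j - 1) (by omega), a2 j (by omega), a3 (j + 1) (by omega)]
      cases decide (t % 2 = 0) <;> rfl
    · rw [ca218, a2 (j - 1) (by omega), a3 j (by omega), a4 (j + 1) (by omega)]
      cases decide (t % 2 = 0) <;> rfl

theorem ca_trapped {c : ℤ → Bool} {t s : ℕ} (hts : t ≤ s) (hm2 : ca218 c t (-2) = true)
    (hm1 : ca218 c t (-1) = true) (h0 : ca218 c t 0 = false) (h1 : ca218 c t 1 = true)
    (h2 : ca218 c t 2 = true) : ca218 c s 0 = false := by
  induction s, hts using Nat.le_induction with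
  | base => exact h0
  | succ s hs ih =>
    have l := (ca_wall (i := -2) hs hm2 hm1).2
    have r := (ca_wall (i := 1) hs h1 h2).1
    norm_num at l
    simp [ca218, ih, l, r, rule218]

theorem ca_symm {c : ℤ → Bool} (h : ∀ i, c (-i) = c i) (t : ℕ) (i : ℤ) :
    ca218 c t (-i) = ca218 c t i := by
  induction t generalizing i with
  | zero => exact h i
  | succ t ih =>
    rw [ca218, ca218, ih, show -i - 1 = -(i + 1) by ring, show -i + 1 = -(i - 1) by ring, ih, ih]
    cases ca218 c t (i - 1) <;> cases ca218 c t i <;> cases ca218 c t (i + 1) <;> rfl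

theorem ca_symm_zero {c : ℤ → Bool} (h : ∀ i, c (-i) = c i) (h0 : c 0 = false) (t : ℕ) :
    ca218 c t 0 = false := by
  induction t with
  | zero => exact h0
  | succ t ih =>
    have e := ca_symm h t 1
    rw [ca218, ih, show (0 : ℤ) - 1 = -1 by ring, show (0 : ℤ) + 1 = 1 by ring, e]
    cases ca218 c t 1 <;> rfl

/-- If all ones on `[-T, T-1]` sit on even cells, `T` is odd, and the cells `T, T+1` carry ones,
then these two ones reach the cells `0, 1` at time `T`: in the light cone, the parity class of `T`
contains no other one. -/
theorem ca_parity_wall {c : ℤ → Bool} {T : ℕ} (hT : T % 2 = 1)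
    (hz : ∀ i : ℤ, -T ≤ i → i < T → i % 2 = 1 → c i = false) (h0 : c T = true)
    (h1 : c (T + 1) = true) (t : ℕ) (ht : t ≤ T) :
    (∀ j : ℤ, -T + t ≤ j → j < T - t → (j + t) % 2 = 1 → ca218 c t j = false) ∧
    (∀ j : ℤ, j = T - t → ca218 c t j = true) ∧
    (∀ j : ℤ, j = T - t + 1 → ca218 c t j = true) := by
  induction t with
  | zero => simpa [ca218] using ⟨hz, h0, h1⟩
  | succ t ih =>
    obtain ⟨a, a0, a1⟩ := ih (by omega)
    push_cast
    refine ⟨fun j h h' e => ?_, fun j h => ?_, fun j h => ?_⟩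
    · rw [ca218, a (j - 1) (by omega) (by omega) (by omega),
        a (j + 1) (by omega) (by omega) (by omega)]
      cases ca218 c t j <;> rfl
    · rw [ca218, a (j - 1) (by omega) (by omega) (by omega), a0 (j + 1) (by omega)]
      cases ca218 c t j <;> rfl
    · rw [ca218, a0 j (by omega), a1 (j + 1) (by omega)]
      cases ca218 c t (j - 1) <;> rfl

/-! ### Separating the rows -/

/-- The right half configuration `0^{b-3} 1 0 1 1 1 …`, starting at cell `1`. -/
def glider218 (b : ℕ) (i : ℤ) : Bool := decide (i = b - 2 ∨ (b : ℤ) ≤ i)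

theorem ca_row_eq {n k b : ℕ} (hb : b % 2 = 1) (h3 : 3 ≤ b) (hk : b ≤ 2 * k + 1)
    (hn : 2 * k + 1 ≤ n) : ca218 (join218 k b (glider218 b)) n 0 = false := by
  have hg := ca_glider (c := join218 k b (glider218 b)) (l := -b) (q := b - 2)
    (by intro i h1 h2; simp only [join218, row218, glider218]; grind)
    (by simp only [join218, row218, glider218]; grind)
    (by simp only [join218, row218, glider218]; grind)
    (by simp only [join218, row218, glider218]; grind)
    (by simp only [join218, row218, glider218]; grind)
    (by simp only [join218, row218, glider218]; grind) (b - 1) (by omega)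
  obtain ⟨-, a0, a1, a2, a3, -⟩ := hg
  have hf := ca_front (c := join218 k b (glider218 b)) (p := -(b + 1)) (r := b - 3)
    (by simp only [join218, row218, glider218]; grind)
    (by intro i h1 h2; simp only [join218, row218, glider218]; grind) (b - 1) (by omega)
  refine ca_trapped (t := b - 1) (by omega) (hf.1 _ (by omega)) (a0 _ (by omega))
    (a1 _ (by omega)) ?_ (a3 _ (by omega))
  rw [a2 _ (by omega)]
  simp
  omega

theorem ca_row_lt {n k b b' : ℕ} (hb : b % 2 = 1) (h3 : 3 ≤ b) (hb' : b' % 2 = 1)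
    (hbb : b < b') (hk : b' ≤ 2 * k + 1) (hn : 2 * k + 1 ≤ n) :
    ca218 (join218 k b' (glider218 b)) n 0 = true := by
  obtain ⟨-, a0, a1, a2, a3, a4⟩ :=
    ca_glider (c := join218 k b' (glider218 b)) (l := -(b + 2)) (q := b - 2)
    (by intro i h1 h2; simp only [join218, row218, glider218]; grind)
    (by simp only [join218, row218, glider218]; grind)
    (by simp only [join218, row218, glider218]; grind)
    (by simp only [join218, row218, glider218]; grind)
    (by simp only [join218, row218, glider218]; grind)
    (by simp only [join218, row218, glider218]; grind) b (by omega)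
  refine (ca_wall (i := 0) (t := b + 1) (by omega) ?_ ?_).1
  · rw [ca218, a1 _ (by omega), a2 _ (by omega), a3 _ (by omega)]
    simp [hb, rule218]
  · rw [ca218, a3 (0 + 1) (by omega), a4 (0 + 1 + 1) (by omega)]
    cases ca218 (join218 k b' (glider218 b)) b (0 + 1 - 1) <;> rfl

theorem ca_row_mirror {n k b : ℕ} :
    ca218 (join218 k b (fun i => row218 k b (-i))) n 0 = false := by
  apply ca_symm_zero
  · intro i
    simp only [join218, row218]
    rcases lt_trichotomy i 0 with h | rfl | h
    · grind
    · rfl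
    · grind
  · simp only [join218, row218]
    grind

theorem ca_row_mirror_lt {n k k' b : ℕ} (hb : b % 2 = 1)
    (hkk : k < k') (hn : 2 * k' + 1 ≤ n) :
    ca218 (join218 k' b (fun i => row218 k b (-i))) n 0 = true := by
  obtain ⟨-, a0, a1⟩ := ca_parity_wall (c := join218 k' b (fun i => row218 k b (-i)))
    (T := 2 * k + 3) (by omega)
    (by intro i h1 h2 h; push_cast at h1 h2; simp only [join218, row218]; grind)
    (by push_cast; simp only [join218, row218]; grind)
    (by push_cast; simp only [join218, row218]; grind) (2 * k + 3) le_rfl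
  exact (ca_wall (i := 0) (t := 2 * k + 3) (by omega) (a0 _ (by omega)) (a1 _ (by omega))).1

/-- Any two distinct rows are separated by some word `y`. -/
theorem row218_separated {n k b k' b' : ℕ} (hb : b % 2 = 1) (h3 : 3 ≤ b) (hk : b ≤ 2 * k + 1)
    (hn : 2 * k + 1 ≤ n) (hb' : b' % 2 = 1) (h3' : 3 ≤ b') (hk' : b' ≤ 2 * k' + 1)
    (hn' : 2 * k' + 1 ≤ n) (hne : ¬ (k = k' ∧ b = b')) :
    ∃ y : List Bool, y.length = n ∧
      iter218 n (word218 (row218 k b) (-n) n ++ false :: y) ≠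
        iter218 n (word218 (row218 k' b') (-n) n ++ false :: y) := by
  have hg : ∀ b : ℕ, 3 ≤ b → glider218 b 0 = false := by
    intro b h
    simp only [glider218]
    grind
  have hm : ∀ k b : ℕ, (fun i => row218 k b (-i)) 0 = false := by
    intro k b
    simp only [row218]
    grind
  rcases lt_trichotomy b b' with h | rfl | h
  · refine ⟨word218 (glider218 b) 1 n, length_word218 _ _ _, ?_⟩
    rw [iter218_join _ _ _ _ (hg b h3), iter218_join _ _ _ _ (hg b h3), ca_row_eq hb h3 hk hn,
      ca_row_lt hb h3 hb' h hk' hn']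
    simp
  · rcases lt_trichotomy k k' with h | rfl | h
    · refine ⟨word218 (fun i => row218 k b (-i)) 1 n, length_word218 _ _ _, ?_⟩
      rw [iter218_join n k b (fun i => row218 k b (-i)) (hm k b),
        iter218_join n k' b (fun i => row218 k b (-i)) (hm k b), ca_row_mirror,
        ca_row_mirror_lt hb h hn']
      simp
    · exact absurd ⟨rfl, rfl⟩ hne
    · refine ⟨word218 (fun i => row218 k' b (-i)) 1 n, length_word218 _ _ _, ?_⟩
      rw [iter218_join n k b (fun i => row218 k' b (-i)) (hm k' b),
        iter218_join n k' b (fun i => row218 k' b (-i)) (hm k' b), ca_row_mirror,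
        ca_row_mirror_lt hb h hn]
      simp
  · refine ⟨word218 (glider218 b') 1 n, length_word218 _ _ _, ?_⟩
    rw [iter218_join _ _ _ _ (hg b' h3'), iter218_join _ _ _ _ (hg b' h3'),
      ca_row_eq hb' h3' hk' hn', ca_row_lt hb' h3' hb h hk hn]
    simp

/-! ### The sets `S_{2k+1}` and counting -/

theorem word218_row_pure {n k : ℕ} (hn : 2 * k + 1 ≤ n) :
    word218 (row218 k (2 * k + 1)) (-n) n =
      List.replicate (n - (2 * k + 1)) true ++ List.replicate (2 * k + 1) false := by
  obtain ⟨m, rfl⟩ := Nat.exists_eq_add_of_le' hn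
  rw [word218_add, Nat.add_sub_cancel]
  congr 1
  · apply word218_const
    intro i h1 h2
    simp only [row218]
    grind
  · apply word218_const
    intro i h1 h2
    simp only [row218]
    grind

theorem word218_row_mixed {n k a b : ℕ} (hab : a + b = 2 * k) (hn : 2 * k + 1 ≤ n) :
    word218 (row218 k b) (-n) n =
      List.replicate (n - (2 * k + 1)) true ++ List.replicate a false ++ [true] ++
        List.replicate b false := by
  obtain ⟨m, rfl⟩ := Nat.exists_eq_add_of_le' hn
  rw [Nat.add_sub_cancel, show m + (2 * k + 1) = m + a + 1 + b by omega,
    word218_add, word218_add, word218_add]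
  congr 1
  · congr 1
    · congr 1
      · apply word218_const
        intro i h1 h2
        simp only [row218]
        grind
      · apply word218_const
        intro i h1 h2
        simp only [row218]
        grind
    · simp only [word218, row218]
      grind
  · apply word218_const
    intro i h1 h2
    simp only [row218]
    grind

/-- The elements of `S_{2k+1}`, parametrised by `b = 2 j + 3` with `j < k`. -/
theorem S218_eq {n k : ℕ} (hk : 1 ≤ k) (hn : 2 * k + 1 ≤ n) :
    S218 n k = (fun j : ℕ => word218 (row218 k (2 * j + 3)) (-n) n) '' (Finset.range k : Set ℕ) := by
  ext w
  simp only [S218, Set.mem_union, Set.mem_singleton_iff, Set.mem_ofPred_eq, Set.mem_image,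
    Finset.coe_range, Set.mem_Iio]
  constructor
  · rintro (rfl | ⟨a, b, ha, hb, h3, hab, rfl⟩)
    · refine ⟨k - 1, by omega, ?_⟩
      rw [← word218_row_pure hn, show 2 * (k - 1) + 3 = 2 * k + 1 by omega]
    · refine ⟨(b - 3) / 2, by omega, ?_⟩
      rw [← word218_row_mixed hab hn, show 2 * ((b - 3) / 2) + 3 = b by omega]
  · rintro ⟨j, hj, rfl⟩
    rcases Nat.lt_or_ge (j + 1) k with h | h
    · exact Or.inr ⟨2 * k - (2 * j + 3), 2 * j + 3, by omega, by omega, by omega, by omega,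
        word218_row_mixed (by omega) hn⟩
    · left
      rw [← word218_row_pure hn, show 2 * j + 3 = 2 * k + 1 by omega]

theorem row218_index_inj {n k k' j j' : ℕ} (hj : j < k) (hn : 2 * k + 1 ≤ n) (hj' : j' < k')
    (hn' : 2 * k' + 1 ≤ n)
    (h : ∀ y : List Bool, y.length = n →
      iter218 n (word218 (row218 k (2 * j + 3)) (-n) n ++ false :: y) =
        iter218 n (word218 (row218 k' (2 * j' + 3)) (-n) n ++ false :: y)) :
    k = k' ∧ j = j' := by
  by_contra hne
  obtain ⟨y, hy, hy'⟩ := row218_separated (n := n) (k := k) (b := 2 * j + 3) (k' := k')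
    (b' := 2 * j' + 3) (by omega) (by omega) (by omega) hn (by omega) (by omega) (by omega) hn'
    (by omega)
  exact hy' (h y hy)

theorem clog_lower_bound {n N : ℕ} (h : (n - 1) / 2 * ((n - 1) / 2 + 1) / 2 ≤ N) :
    2 * Nat.clog 2 n - 5 ≤ Nat.clog 2 N := by
  rcases Nat.lt_or_ge (Nat.clog 2 n) 3 with hm | hm
  · omega
  obtain ⟨m, hm⟩ := Nat.exists_eq_add_of_le' hm
  have h1 : 2 ^ (m + 2) < n := (Nat.lt_clog_iff_pow_lt (by norm_num)).1 (by omega)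
  have h2 : 2 ^ (m + 1) ≤ (n - 1) / 2 := by
    rw [pow_succ] at h1
    omega
  have h3 : 2 ^ (m + 1) * (2 ^ (m + 1) + 1) ≤ (n - 1) / 2 * ((n - 1) / 2 + 1) :=
    Nat.mul_le_mul h2 (by omega)
  have h4 : 2 ^ (2 * m) < N := by
    have e : 2 ^ (m + 1) * (2 ^ (m + 1) + 1) = 4 * 2 ^ (2 * m) + 2 * 2 ^ m := by ring
    have : 0 < 2 ^ (2 * m) := by positivity
    omega
  have h5 : 2 * m < Nat.clog 2 N := (Nat.lt_clog_iff_pow_lt (by norm_num)).2 h4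
  omega

/-- Quadratic lower bound for rule 218 with central cell 0: with `K = ⌊(n-1)/2⌋`,
the sets `S_{2k+1}` for `1 ≤ k ≤ K` are pairwise disjoint and `|S_{2k+1}| = k`; the
rows of the matrix `(x,y) ↦ fⁿ(x·0·y)` indexed by elements of `⋃_{k=1}^K S_{2k+1}`
are pairwise distinct; hence the matrix has at least `K(K+1)/2` distinct rows and
the one-round communication complexity `⌈log₂(#distinct rows)⌉` is at least
`2⌈log₂ n⌉ - 5`. -/
theorem rule218_quadratic_lower_bound (n K : ℕ) (hK : K = (n - 1) / 2) :
    (∀ k k', 1 ≤ k → k ≤ K → 1 ≤ k' → k' ≤ K → k ≠ k' →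
      Disjoint (S218 n k) (S218 n k')) ∧
    (∀ k, 1 ≤ k → k ≤ K → (S218 n k).ncard = k) ∧
    (∀ x xt : List Bool, (∃ k, 1 ≤ k ∧ k ≤ K ∧ x ∈ S218 n k) →
      (∃ k, 1 ≤ k ∧ k ≤ K ∧ xt ∈ S218 n k) → x ≠ xt →
      ∃ y : List Bool, y.length = n ∧
        iter218 n (x ++ false :: y) ≠ iter218 n (xt ++ false :: y)) ∧
    (K * (K + 1) / 2 ≤
      Set.ncard { g : {y : List Bool // y.length = n} → Bool |
        ∃ x : List Bool, x.length = n ∧ g = fun y => iter218 n (x ++ false :: y.1) }) ∧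
    (2 * Nat.clog 2 n - 5 ≤
      Nat.clog 2 (Set.ncard { g : {y : List Bool // y.length = n} → Bool |
        ∃ x : List Bool, x.length = n ∧
          g = fun y => iter218 n (x ++ false :: y.1) })) := by
  have hKn : ∀ k, 1 ≤ k → k ≤ K → 2 * k + 1 ≤ n := by
    intro k _ _
    omega
  have hcard : K * (K + 1) / 2 ≤
      Set.ncard { g : {y : List Bool // y.length = n} → Bool |
        ∃ x : List Bool, x.length = n ∧ g = fun y => iter218 n (x ++ false :: y.1) } := by
    have hfin : Finite {y : List Bool // y.length = n} := List.finite_length_eq Bool n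
    let F : (Σ _ : ℕ, ℕ) → {y : List Bool // y.length = n} → Bool := fun p y =>
      iter218 n (word218 (row218 p.1 (2 * p.2 + 3)) (-n) n ++ false :: y.1)
    let A : Finset (Σ _ : ℕ, ℕ) := (Finset.range (K + 1)).sigma fun k => Finset.range k
    have hA : A.card = K * (K + 1) / 2 := by
      simp only [A, Finset.card_sigma, Finset.card_range]
      rw [Finset.sum_range_id, Nat.add_sub_cancel, mul_comm]
    have hinj : Set.InjOn F A := by
      rintro ⟨k, j⟩ hp ⟨k', j'⟩ hp' h
      simp only [A, Finset.coe_sigma, Set.mem_sigma_iff, Finset.coe_range, Set.mem_Iio] at hp hp'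
      obtain ⟨rfl, rfl⟩ := row218_index_inj hp.2 (hKn k (by omega) (by omega)) hp'.2
        (hKn k' (by omega) (by omega)) (fun y hy => congrFun h ⟨y, hy⟩)
      rfl
    rw [← hA, ← Set.ncard_coe_finset, ← hinj.ncard_image]
    apply Set.ncard_le_ncard _ (Set.toFinite _)
    rintro _ ⟨p, -, rfl⟩
    exact ⟨_, length_word218 _ _ _, rfl⟩
  refine ⟨?_, ?_, ?_, hcard, clog_lower_bound (hK ▸ hcard)⟩
  · intro k k' h1 h2 h1' h2' hne
    rw [S218_eq h1 (hKn k h1 h2), S218_eq h1' (hKn k' h1' h2'), Set.disjoint_left]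
    rintro _ ⟨j, hj, rfl⟩ ⟨j', hj', h⟩
    simp only [Finset.coe_range, Set.mem_Iio] at hj hj' h
    exact hne (row218_index_inj hj (hKn k h1 h2) hj' (hKn k' h1' h2')
      (fun y _ => by rw [h])).1
  · intro k h1 h2
    rw [S218_eq h1 (hKn k h1 h2), Set.InjOn.ncard_image, Set.ncard_coe_finset,
      Finset.card_range]
    intro j hj j' hj' h
    simp only [Finset.coe_range, Set.mem_Iio] at hj hj' h
    exact (row218_index_inj hj (hKn k h1 h2) hj' (hKn k h1 h2) (fun y _ => by rw [h])).2
  · rintro x xt ⟨k, h1, h2, hx⟩ ⟨k', h1', h2', hx'⟩ hne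
    rw [S218_eq h1 (hKn k h1 h2)] at hx
    rw [S218_eq h1' (hKn k' h1' h2')] at hx'
    obtain ⟨j, hj, rfl⟩ := hx
    obtain ⟨j', hj', rfl⟩ := hx'
    simp only [Finset.coe_range, Set.mem_Iio] at hj hj'
    apply row218_separated (by omega) (by omega) (by omega) (hKn k h1 h2) (by omega) (by omega)
      (by omega) (hKn k' h1' h2')
    rintro ⟨rfl, h⟩
    obtain rfl : j = j' := by omega
    exact hne rfl
end
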